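/- Let {x^k} be generated by the multiobjective MFISTA algorithm. Let X* denote the set of weakly Pareto optimal points of F and let Ω := { x ∈ ℝ^n : F_i(x) ≤ F_i(x^0) for all i }. Assume X* is nonempty, assume that for every x ∈ Ω there exists x* ∈ X* with F_i(x*) ≤ F_i(x) for all i, and assume R := sup_{F* ∈ F(X* ∩ Ω)} inf_{x : F(x) = F*} ‖x − x^0‖² < ∞. Then every accumulation point of the sequence {x^k} is weakly Pareto optimal. -/

import Mathlib

open scoped RealInnerProductSpace

noncomputable abbrev E (n : ℕ) := EuclideanSpace ℝ (Fin n)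

/-!
For a fixed comparison point `w` measure progress by the gap `σ p = min_i (F_i p - F_i w)`; a point
is weakly Pareto optimal exactly when no `w` makes its gap positive. The model minimised at each
step is `ℓ`-strongly convex and majorises `max_i (F_i - F_i x)`, so testing its minimiser against
`w` and against the previous iterate gives two inequalities for `σ`. Weighting them with `t` and
`t * (t - 1)`, where `t ^ 2 - t` is the square of the previous weight, shows as for scalar FISTA
that `t_k ^ 2 * σ (x_k) + ℓ / 2 * ‖t_k • z_k + (1 - t_k) • x_{k-1} - w‖ ^ 2` is nonincreasing.
Hence `σ (x_k)` has an upper bound of order `1 / k ^ 2` for every `w`, and lower semicontinuity of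
`σ` carries the bound `0` over to accumulation points.
-/

open Filter Set
open scoped Gradient NNReal Topology

section Convexity

lemma convexOn_ciSup {ι V : Type*} [Nonempty ι] [AddCommMonoid V] [Module ℝ V] {s : Set V}
    {h : ι → V → ℝ} (hh : ∀ i, ConvexOn ℝ s (h i))
    (hbdd : ∀ p ∈ s, BddAbove (range fun i ↦ h i p)) :
    ConvexOn ℝ s fun p ↦ ⨆ i, h i p := by
  have hs : Convex ℝ s := (hh (Classical.arbitrary ι)).1
  refine ⟨hs, fun p hp q hq a b ha hb hab ↦ ciSup_le fun i ↦ ?_⟩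
  refine ((hh i).2 hp hq ha hb hab).trans ?_
  gcongr
  · exact le_ciSup (hbdd p hp) i
  · exact le_ciSup (hbdd q hq) i

lemma add_modulus_le_of_isMinOn {V : Type*} [NormedAddCommGroup V] [NormedSpace ℝ V] {s : Set V}
    {ψ : ℝ → ℝ} {φ : V → ℝ} {z w : V} (hφ : UniformConvexOn s ψ φ) (hmin : IsMinOn φ s z)
    (hz : z ∈ s) (hw : w ∈ s) : φ z + ψ ‖w - z‖ ≤ φ w := by
  have segment_bound : ∀ r ∈ Ioo (0 : ℝ) 1, φ z + (1 - r) * ψ ‖w - z‖ ≤ φ w := by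
    rintro r ⟨hr, hr1⟩
    have hconv := hφ.2 hw hz hr.le (sub_nonneg.2 hr1.le) (add_sub_cancel r 1)
    have hle : φ z ≤ φ (r • w + (1 - r) • z) :=
      hmin (hφ.1 hw hz hr.le (sub_nonneg.2 hr1.le) (add_sub_cancel r 1))
    simp only [smul_eq_mul] at hconv
    refine le_of_mul_le_mul_left ?_ hr
    linarith
  have hlim : Tendsto (fun r : ℝ ↦ φ z + (1 - r) * ψ ‖w - z‖) (𝓝[>] 0)
      (𝓝 (φ z + (1 - 0) * ψ ‖w - z‖)) :=
    (Continuous.tendsto (by fun_prop) 0).mono_left nhdsWithin_le_nhds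
  rw [sub_zero, one_mul] at hlim
  exact le_of_tendsto hlim (eventually_of_mem (Ioo_mem_nhdsGT zero_lt_one) segment_bound)

variable {V : Type*} [NormedAddCommGroup V] [InnerProductSpace ℝ V]

lemma norm_sq_combo_sub {a b : ℝ} (hab : a + b = 1) (p q w : V) :
    ‖a • p + b • q - w‖ ^ 2 = a * ‖p - w‖ ^ 2 + b * ‖q - w‖ ^ 2 - a * b * ‖p - q‖ ^ 2 := by
  obtain rfl : b = 1 - a := by linarith
  have hcombo : a • p + (1 - a) • q - w = a • (p - w) + (1 - a) • (q - w) := by module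
  rw [hcombo, ← sub_sub_sub_cancel_right p q w, norm_add_sq_real, norm_sub_sq_real (p - w) (q - w),
    norm_smul, norm_smul, real_inner_smul_left, real_inner_smul_right, mul_pow, mul_pow,
    Real.norm_eq_abs, Real.norm_eq_abs, sq_abs, sq_abs]
  ring

lemma strongConvexOn_add_norm_sub_sq {s : Set V} {h : V → ℝ} (hh : ConvexOn ℝ s h) (c : ℝ)
    (y : V) : StrongConvexOn s c fun p ↦ h p + c / 2 * ‖p - y‖ ^ 2 := by
  refine ⟨hh.1, fun p hp q hq a b ha hb hab ↦ ?_⟩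
  have hconv := hh.2 hp hq ha hb hab
  simp only [smul_eq_mul] at hconv ⊢
  rw [norm_sq_combo_sub hab]
  linarith

variable [CompleteSpace V]

lemma hasDerivAt_comp_lineMap {f : V → ℝ} {f' y z : V} {s : ℝ}
    (hf : HasGradientAt f f' (AffineMap.lineMap y z s)) :
    HasDerivAt (fun r : ℝ ↦ f (AffineMap.lineMap y z r)) ⟪f', z - y⟫ s :=
  hf.hasFDerivAt.comp_hasDerivAt s AffineMap.hasDerivAt_lineMap

lemma add_inner_le_of_convexOn_of_hasGradientAt {s : Set V} {f : V → ℝ} {f' y z : V}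
    (hf : ConvexOn ℝ s f) (hf' : HasGradientAt f f' y) (hy : y ∈ s) (hz : z ∈ s) :
    f y + ⟪f', z - y⟫ ≤ f z := by
  have hline := hf.comp_affineMap (AffineMap.lineMap y z : ℝ →ᵃ[ℝ] V)
  have hderiv : HasDerivAt (f ∘ (AffineMap.lineMap y z : ℝ →ᵃ[ℝ] V)) ⟪f', z - y⟫ 0 :=
    hasDerivAt_comp_lineMap (by rwa [AffineMap.lineMap_apply_zero])
  have hslope := hline.le_slope_of_hasDerivAt (by simpa) (by simpa) zero_lt_one hderiv
  rw [slope_def_field] at hslope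
  simp only [Function.comp_apply, AffineMap.lineMap_apply_zero, AffineMap.lineMap_apply_one,
    sub_zero, div_one] at hslope
  linarith

lemma le_add_inner_gradient_add_of_lipschitzWith {f : V → ℝ} {K : ℝ≥0} (hf : Differentiable ℝ f)
    (hlip : LipschitzWith K (∇ f)) (y z : V) :
    f z ≤ f y + ⟪∇ f y, z - y⟫ + K / 2 * ‖z - y‖ ^ 2 := by
  let H : ℝ → ℝ := fun s ↦
    f (AffineMap.lineMap y z s) - s * ⟪∇ f y, z - y⟫ - s ^ 2 * (K / 2 * ‖z - y‖ ^ 2)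
  have hH : ∀ s, HasDerivAt H
      (⟪∇ f (AffineMap.lineMap y z s) - ∇ f y, z - y⟫ - s * (K * ‖z - y‖ ^ 2)) s := by
    intro s
    have hderiv := ((hasDerivAt_comp_lineMap (y := y) (z := z) (hf _).hasGradientAt).sub
      ((hasDerivAt_id s).mul_const ⟪∇ f y, z - y⟫)).sub
      ((hasDerivAt_pow 2 s).mul_const (K / 2 * ‖z - y‖ ^ 2))
    refine hderiv.congr_deriv ?_
    rw [inner_sub_left]
    push_cast
    ring
  have hderiv_nonpos : ∀ s, 0 ≤ s →
      ⟪∇ f (AffineMap.lineMap y z s) - ∇ f y, z - y⟫ - s * (K * ‖z - y‖ ^ 2) ≤ 0 := by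
    intro s hs
    refine sub_nonpos.2 ?_
    calc ⟪∇ f (AffineMap.lineMap y z s) - ∇ f y, z - y⟫
        ≤ ‖∇ f (AffineMap.lineMap y z s) - ∇ f y‖ * ‖z - y‖ := real_inner_le_norm _ _
      _ ≤ K * ‖AffineMap.lineMap y z s - y‖ * ‖z - y‖ := by gcongr; exact hlip.norm_sub_le _ _
      _ = s * (K * ‖z - y‖ ^ 2) := by
        rw [AffineMap.lineMap_apply_module', add_sub_cancel_right, norm_smul,
          Real.norm_of_nonneg hs]
        ring
  have hanti : AntitoneOn H (Icc 0 1) :=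
    antitoneOn_of_hasDerivWithinAt_nonpos (convex_Icc 0 1)
      (fun s _ ↦ (hH s).continuousAt.continuousWithinAt)
      (fun s _ ↦ (hH s).hasDerivWithinAt)
      (fun s hs ↦ hderiv_nonpos s (interior_subset hs).1)
  have hends := hanti (left_mem_Icc.2 zero_le_one) (right_mem_Icc.2 zero_le_one) zero_le_one
  simp only [H, AffineMap.lineMap_apply_one, AffineMap.lineMap_apply_zero] at hends
  linarith

end Convexity

section WeakPareto

/-- Weak Pareto optimality of `a` for the objectives `F i`: no point is strictly better than `a` in
every objective. -/
def WeaklyParetoOptimal {ι X : Type*} (F : ι → X → ℝ) (a : X) : Prop :=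
  ¬∃ w, ∀ i, F i w < F i a

/-- The gap `min_i (F i p - F i w)`, by which `p` is worse than `w` in every objective
simultaneously; its supremum over `w` is the usual merit function of multiobjective optimization.
The infimum is meant for finite nonempty `ι`. -/
noncomputable def minGap {ι X : Type*} (F : ι → X → ℝ) (w p : X) : ℝ :=
  ⨅ i, (F i p - F i w)

variable {ι X : Type*} [Finite ι] {F : ι → X → ℝ} {w p q : X} {c : ℝ}

lemma minGap_le (F : ι → X → ℝ) (w p : X) (i : ι) : minGap F w p ≤ F i p - F i w :=
  ciInf_le (finite_range _).bddBelow i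

variable [Nonempty ι]

lemma lt_minGap_iff : c < minGap F w p ↔ ∀ i, c < F i p - F i w := by
  refine ⟨fun h i ↦ h.trans_le (minGap_le F w p i), fun h ↦ ?_⟩
  obtain ⟨i, hi⟩ := exists_eq_ciInf_of_finite (f := fun i ↦ F i p - F i w)
  exact (h i).trans_eq hi

lemma minGap_le_add (h : ∀ i, F i q - F i p ≤ c) : minGap F w q ≤ minGap F w p + c := by
  rw [← sub_le_iff_le_add]
  refine le_ciInf fun i ↦ ?_
  linarith [h i, minGap_le F w q i]

variable [TopologicalSpace X]

lemma lowerSemicontinuous_minGap (hF : ∀ i, LowerSemicontinuous (F i)) (w : X) :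
    LowerSemicontinuous (minGap F w) := by
  intro p c hc
  have hnear : ∀ i, ∀ᶠ q in 𝓝 p, c + F i w < F i q := fun i ↦
    hF i p _ (lt_sub_iff_add_lt.1 (lt_minGap_iff.1 hc i))
  filter_upwards [eventually_all.2 hnear] with q hq
  exact lt_minGap_iff.2 fun i ↦ lt_sub_iff_add_lt.2 (hq i)

lemma weaklyParetoOptimal_of_mapClusterPt {α : Type*} {l : Filter α} {x : α → X} {a : X}
    (hF : ∀ i, LowerSemicontinuous (F i))
    (hgap : ∀ w, ∀ ε > 0, ∀ᶠ k in l, minGap F w (x k) < ε) (ha : MapClusterPt a l x) :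
    WeaklyParetoOptimal F a := by
  rintro ⟨w, hw⟩
  have hpos : 0 < minGap F w a := lt_minGap_iff.2 fun i ↦ sub_pos.2 (hw i)
  have hfreq : ∃ᶠ k in l, minGap F w a / 2 < minGap F w (x k) :=
    ha.frequently (lowerSemicontinuous_minGap hF w a _ (half_lt_self hpos))
  obtain ⟨k, hlt, hgt⟩ := (hfreq.and_eventually (hgap w _ (half_pos hpos))).exists
  exact lt_asymm hlt hgt

end WeakPareto

section ProximalStep

variable {ι V : Type*} [NormedAddCommGroup V] [InnerProductSpace ℝ V] [CompleteSpace V]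

/-- The standing assumptions on the objectives `f i + g i`: the smooth parts `f i` are convex and
differentiable with a common Lipschitz constant `ℓ` for their gradients, and the parts `g i` are
convex. -/
structure IsConvexComposite (f g : ι → V → ℝ) (ℓ : ℝ≥0) : Prop where
  convexOn_left : ∀ i, ConvexOn ℝ univ (f i)
  differentiable : ∀ i, Differentiable ℝ (f i)
  lipschitzWith_gradient : ∀ i, LipschitzWith ℓ (∇ (f i))
  convexOn_right : ∀ i, ConvexOn ℝ univ (g i)

/-- The function `φ_{x,y,ℓ}` minimised in a multiobjective proximal gradient step: the `f i` are
linearised at `y`, and the change of the objectives `f i + g i` is measured from `x`. -/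
noncomputable def proxModel (f g : ι → V → ℝ) (ℓ : ℝ) (x y z : V) : ℝ :=
  (⨆ i, (⟪∇ (f i) y, z - y⟫ + g i z + f i y - (f + g) i x)) + ℓ / 2 * ‖z - y‖ ^ 2

variable {f g : ι → V → ℝ}

lemma proxModel_le [Nonempty ι] (hconv : ∀ i, ConvexOn ℝ univ (f i))
    (hf : ∀ i, Differentiable ℝ (f i)) {x y v : V} {ℓ c : ℝ}
    (hv : ∀ i, (f + g) i v - (f + g) i x ≤ c) :
    proxModel f g ℓ x y v ≤ c + ℓ / 2 * ‖v - y‖ ^ 2 := by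
  refine add_le_add_left (ciSup_le fun i ↦ ?_) _
  have hgrad := add_inner_le_of_convexOn_of_hasGradientAt (hconv i) (hf i y).hasGradientAt
    (mem_univ y) (mem_univ v)
  have hvi := hv i
  simp only [Pi.add_apply] at hvi ⊢
  linarith

variable [Finite ι]

lemma strongConvexOn_proxModel [Nonempty ι] (hg : ∀ i, ConvexOn ℝ univ (g i)) (ℓ : ℝ) (x y : V) :
    StrongConvexOn univ ℓ (proxModel f g ℓ x y) := by
  refine strongConvexOn_add_norm_sub_sq (convexOn_ciSup (fun i ↦ ?_) fun _ _ ↦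
    (finite_range _).bddAbove) ℓ y
  have hlin : ConvexOn ℝ univ fun z ↦ ⟪∇ (f i) y, z⟫ :=
    (innerₗ V (∇ (f i) y)).convexOn convex_univ
  refine ((hlin.add (hg i)).add_const (f i y - (f + g) i x - ⟪∇ (f i) y, y⟫)).congr fun z _ ↦ ?_
  simp only [Pi.add_apply, inner_sub_right]
  ring

lemma sub_le_proxModel {ℓ : ℝ≥0} {i : ι} (hf : Differentiable ℝ (f i))
    (hlip : LipschitzWith ℓ (∇ (f i))) (x y z : V) :
    (f + g) i z - (f + g) i x ≤ proxModel f g ℓ x y z := by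
  have hdescent := le_add_inner_gradient_add_of_lipschitzWith hf hlip y z
  have hsup := le_ciSup (f := fun i ↦ ⟪∇ (f i) y, z - y⟫ + g i z + f i y - (f + g) i x)
    (finite_range _).bddAbove i
  simp only [proxModel, Pi.add_apply] at hsup ⊢
  linarith

variable [Nonempty ι] {ℓ : ℝ≥0} {x y z : V}

lemma sub_le_of_isMinOn_proxModel (h : IsConvexComposite f g ℓ)
    (hz : IsMinOn (proxModel f g ℓ x y) univ z) {v : V} {c : ℝ}
    (hv : ∀ i, (f + g) i v - (f + g) i x ≤ c) (i : ι) :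
    (f + g) i z - (f + g) i x ≤ c + ℓ / 2 * (‖y - v‖ ^ 2 - ‖z - v‖ ^ 2) := by
  have hupper := sub_le_proxModel (g := g) (h.differentiable i) (h.lipschitzWith_gradient i) x y z
  have hgrowth := add_modulus_le_of_isMinOn (strongConvexOn_proxModel h.convexOn_right ℓ x y) hz
    (mem_univ z) (mem_univ v)
  have hlower := proxModel_le h.convexOn_left h.differentiable (y := y) (ℓ := ℓ) hv
  rw [norm_sub_rev y v, norm_sub_rev z v]
  linarith

lemma minGap_le_of_isMinOn_proxModel (h : IsConvexComposite f g ℓ)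
    (hz : IsMinOn (proxModel f g ℓ x y) univ z) (w : V) :
    minGap (f + g) w z ≤ ℓ / 2 * (‖y - w‖ ^ 2 - ‖z - w‖ ^ 2) := by
  have hw : ∀ i, (f + g) i w - (f + g) i x ≤ -minGap (f + g) w x := fun i ↦ by
    linarith [minGap_le (f + g) w x i]
  linarith [minGap_le_add (w := w) (sub_le_of_isMinOn_proxModel h hz hw)]

lemma minGap_le_minGap_add_of_isMinOn_proxModel (h : IsConvexComposite f g ℓ)
    (hz : IsMinOn (proxModel f g ℓ x y) univ z) (w : V) :
    minGap (f + g) w z ≤ minGap (f + g) w x + ℓ / 2 * (‖y - x‖ ^ 2 - ‖z - x‖ ^ 2) := by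
  have hstep := sub_le_of_isMinOn_proxModel h hz (v := x) (c := 0) fun i ↦ (sub_self _).le
  simpa only [zero_add] using minGap_le_add (w := w) hstep

end ProximalStep

section Momentum

/-- The recursion `t ↦ (1 + √(1 + 4 t²)) / 2` for the FISTA weights: the positive root `s` of
`s ^ 2 - s = t ^ 2`. -/
noncomputable def fistaNext (t : ℝ) : ℝ :=
  (1 + √(1 + 4 * t ^ 2)) / 2

lemma fistaNext_sq_sub_self (t : ℝ) : fistaNext t ^ 2 - fistaNext t = t ^ 2 := by
  have hsq : √(1 + 4 * t ^ 2) ^ 2 = 1 + 4 * t ^ 2 := Real.sq_sqrt (by positivity)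
  rw [fistaNext]
  linear_combination hsq / 4

lemma add_half_le_fistaNext (t : ℝ) : t + 1 / 2 ≤ fistaNext t := by
  have hroot : 2 * t ≤ √(1 + 4 * t ^ 2) := Real.le_sqrt_of_sq_le (by linarith)
  rw [fistaNext]
  linarith

/-- One FISTA step abstractly: `σx`, `σz` play the role of the gaps at the current iterate `x` and
at the result `z` of the proximal step from `y`. -/
lemma accelerated_energy_le {V : Type*} [NormedAddCommGroup V] [InnerProductSpace ℝ V]
    {t c σx σz : ℝ} {x y z w : V} (ht : 1 ≤ t)
    (hw : σz ≤ c * (‖y - w‖ ^ 2 - ‖z - w‖ ^ 2))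
    (hx : σz ≤ σx + c * (‖y - x‖ ^ 2 - ‖z - x‖ ^ 2)) :
    t ^ 2 * σz + c * ‖t • z + (1 - t) • x - w‖ ^ 2 ≤
      (t ^ 2 - t) * σx + c * ‖t • y + (1 - t) • x - w‖ ^ 2 := by
  rw [norm_sq_combo_sub (add_sub_cancel t 1), norm_sq_combo_sub (add_sub_cancel t 1)]
  have hw' := mul_le_mul_of_nonneg_left hw (zero_le_one.trans ht)
  have hx' := mul_le_mul_of_nonneg_left hx
    (mul_nonneg (zero_le_one.trans ht) (sub_nonneg.2 ht))
  linarith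

end Momentum

section MFISTA

variable {ι V : Type*} [NormedAddCommGroup V] [InnerProductSpace ℝ V] [CompleteSpace V]

/-- The sequences `x`, `y`, `z`, `t` form a run of the multiobjective MFISTA algorithm for the
objectives `f i + g i`. As in the algorithm, `y`, `z`, `t` start at index `1` and their values at
`0` are irrelevant; the recursions are shifted so as to avoid subtraction of indices. -/
structure IsMFISTA (f g : ι → V → ℝ) (ℓ : ℝ) (x y z : ℕ → V) (t : ℕ → ℝ) : Prop where
  y_one : y 1 = x 0
  t_one : t 1 = 1
  t_succ : ∀ k, t (k + 2) = fistaNext (t (k + 1))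
  isMinOn_z : ∀ k, IsMinOn (proxModel f g ℓ (x k) (y (k + 1))) univ (z (k + 1))
  x_eq_z : ∀ k, 0 ≤ (⨆ i, ((f + g) i (x k) - (f + g) i (z (k + 1)))) → x (k + 1) = z (k + 1)
  x_eq_x : ∀ k, ¬0 ≤ (⨆ i, ((f + g) i (x k) - (f + g) i (z (k + 1)))) → x (k + 1) = x k
  y_succ : ∀ k, y (k + 2) = x (k + 1) + (t (k + 1) / t (k + 2)) • (z (k + 1) - x (k + 1)) +
    ((t (k + 1) - 1) / t (k + 2)) • (x (k + 1) - x k)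

namespace IsMFISTA

variable {f g : ι → V → ℝ} {x y z : ℕ → V} {t : ℕ → ℝ}

lemma add_two_half_le_t {ℓ : ℝ} (h : IsMFISTA f g ℓ x y z t) (k : ℕ) :
    ((k : ℝ) + 2) / 2 ≤ t (k + 1) := by
  induction k with
  | zero => simp [h.t_one]
  | succ k ih =>
    have hnext := add_half_le_fistaNext (t (k + 1))
    rw [← h.t_succ] at hnext
    push_cast
    linarith

lemma one_le_t {ℓ : ℝ} (h : IsMFISTA f g ℓ x y z t) (k : ℕ) : 1 ≤ t (k + 1) := by
  linarith [h.add_two_half_le_t k, k.cast_nonneg (α := ℝ)]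

lemma extrapolation_eq {ℓ : ℝ} (h : IsMFISTA f g ℓ x y z t) (k : ℕ) :
    t (k + 2) • y (k + 2) + (1 - t (k + 2)) • x (k + 1) =
      t (k + 1) • z (k + 1) + (1 - t (k + 1)) • x k := by
  have ht : t (k + 2) ≠ 0 := (zero_lt_one.trans_le (h.one_le_t (k + 1))).ne'
  rw [h.y_succ, smul_add, smul_add, smul_smul, smul_smul, mul_div_cancel₀ _ ht,
    mul_div_cancel₀ _ ht]
  module

variable [Finite ι] [Nonempty ι]

lemma minGap_x_le_minGap_z {ℓ : ℝ} (h : IsMFISTA f g ℓ x y z t) (w : V) (k : ℕ) :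
    minGap (f + g) w (x (k + 1)) ≤ minGap (f + g) w (z (k + 1)) := by
  by_cases hsup : 0 ≤ ⨆ i, ((f + g) i (x k) - (f + g) i (z (k + 1)))
  · rw [h.x_eq_z k hsup]
  · rw [h.x_eq_x k hsup, ← add_zero (minGap (f + g) w (z (k + 1)))]
    exact minGap_le_add fun i ↦
      (le_ciSup (f := fun i ↦ (f + g) i (x k) - (f + g) i (z (k + 1)))
        (finite_range _).bddAbove i).trans (not_le.1 hsup).le

variable {ℓ : ℝ≥0}

theorem energy_le (h : IsMFISTA f g ℓ x y z t) (hfg : IsConvexComposite f g ℓ) (w : V) (k : ℕ) :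
    t (k + 1) ^ 2 * minGap (f + g) w (x (k + 1)) +
        ℓ / 2 * ‖t (k + 1) • z (k + 1) + (1 - t (k + 1)) • x k - w‖ ^ 2 ≤
      ℓ / 2 * ‖x 0 - w‖ ^ 2 := by
  induction k with
  | zero =>
    have hgap := minGap_le_of_isMinOn_proxModel hfg (h.isMinOn_z 0) w
    have hxz := h.minGap_x_le_minGap_z w 0
    simp only [zero_add, h.y_one, h.t_one, one_pow, one_mul, one_smul, sub_self, zero_smul,
      add_zero] at hgap hxz ⊢
    linarith
  | succ k ih =>
    have hz := h.isMinOn_z (k + 1)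
    have hxz := mul_le_mul_of_nonneg_left (h.minGap_x_le_minGap_z w (k + 1)) (sq_nonneg (t (k + 2)))
    have hstep := accelerated_energy_le (h.one_le_t (k + 1))
      (minGap_le_of_isMinOn_proxModel hfg hz w)
      (minGap_le_minGap_add_of_isMinOn_proxModel hfg hz w)
    have ht : t (k + 2) ^ 2 - t (k + 2) = t (k + 1) ^ 2 := by
      rw [h.t_succ, fistaNext_sq_sub_self]
    rw [ht, h.extrapolation_eq] at hstep
    linarith

theorem minGap_le_div (h : IsMFISTA f g ℓ x y z t) (hfg : IsConvexComposite f g ℓ) (w : V)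
    (k : ℕ) :
    minGap (f + g) w (x (k + 1)) ≤ 2 * ℓ * ‖x 0 - w‖ ^ 2 / ((k : ℝ) + 2) ^ 2 := by
  have hk : (0 : ℝ) < (k + 2) / 2 := by positivity
  have ht : (((k : ℝ) + 2) / 2) ^ 2 ≤ t (k + 1) ^ 2 := by
    gcongr
    exact h.add_two_half_le_t k
  have htgap : t (k + 1) ^ 2 * minGap (f + g) w (x (k + 1)) ≤ ℓ / 2 * ‖x 0 - w‖ ^ 2 :=
    le_of_add_le_of_nonneg_left (h.energy_le hfg w k) (by positivity)
  calc minGap (f + g) w (x (k + 1))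
      ≤ ℓ / 2 * ‖x 0 - w‖ ^ 2 / t (k + 1) ^ 2 :=
        (le_div_iff₀' ((pow_pos hk 2).trans_le ht)).2 htgap
    _ ≤ ℓ / 2 * ‖x 0 - w‖ ^ 2 / (((k : ℝ) + 2) / 2) ^ 2 := by gcongr
    _ = 2 * ℓ * ‖x 0 - w‖ ^ 2 / ((k : ℝ) + 2) ^ 2 := by field_simp

theorem eventually_minGap_lt (h : IsMFISTA f g ℓ x y z t) (hfg : IsConvexComposite f g ℓ) (w : V)
    {ε : ℝ} (hε : 0 < ε) : ∀ᶠ k in atTop, minGap (f + g) w (x k) < ε := by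
  have hlim : Tendsto (fun k : ℕ ↦ 2 * ℓ * ‖x 0 - w‖ ^ 2 / ((k : ℝ) + 2) ^ 2) atTop (𝓝 0) :=
    tendsto_const_nhds.div_atTop <| (tendsto_pow_atTop two_ne_zero).comp <|
      tendsto_atTop_add_const_right _ _ tendsto_natCast_atTop_atTop
  rw [← map_add_atTop_eq_nat 1, eventually_map]
  filter_upwards [hlim.eventually_lt_const hε] with k hk
  exact (h.minGap_le_div hfg w k).trans_lt hk

end IsMFISTA

theorem stmt_17_general [Finite ι] [Nonempty ι] {f g : ι → V → ℝ} {ℓ : ℝ≥0}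
    (hfg : IsConvexComposite f g ℓ) (hg : ∀ i, LowerSemicontinuous (g i))
    {x y z : ℕ → V} {t : ℕ → ℝ} (h : IsMFISTA f g ℓ x y z t)
    {a : V} (ha : MapClusterPt a atTop x) : WeaklyParetoOptimal (f + g) a := by
  have hF : ∀ i, LowerSemicontinuous ((f + g) i) := fun i ↦
    (hfg.differentiable i).continuous.lowerSemicontinuous.add (hg i)
  exact weaklyParetoOptimal_of_mapClusterPt hF (fun w _ ↦ h.eventually_minGap_lt hfg w) ha

end MFISTA

theorem stmt_17
    (n m : ℕ) (hn : 1 ≤ n) (hm : 1 ≤ m)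
    (f g F : Fin m → E n → ℝ)
    (L : Fin m → ℝ) (hL : ∀ i, 0 < L i)
    (hfc : ∀ i, ConvexOn ℝ Set.univ (f i))
    (hfd : ∀ i, ContDiff ℝ 1 (f i))
    (hflip : ∀ i a b, ‖gradient (f i) a - gradient (f i) b‖ ≤ L i * ‖a - b‖)
    (hgc : ∀ i, ConvexOn ℝ Set.univ (g i))
    (hF : ∀ i w, F i w = f i w + g i w)
    (ℓ : ℝ) (hℓ : 0 < ℓ) (hℓL : ∀ i, L i ≤ ℓ)
    (d : E n → E n → E n)
    (hd : ∀ a b w,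
      (⨆ i, (⟪gradient (f i) b, d a b - b⟫ + g i (d a b) + f i b - F i a)) +
          ℓ / 2 * ‖d a b - b‖ ^ 2 ≤
        (⨆ i, (⟪gradient (f i) b, w - b⟫ + g i w + f i b - F i a)) +
          ℓ / 2 * ‖w - b‖ ^ 2)
    (x y z : ℕ → E n) (t : ℕ → ℝ)
    (hy1 : y 1 = x 0) (ht1 : t 1 = 1)
    (ht : ∀ k, 1 ≤ k → t (k + 1) = (1 + Real.sqrt (1 + 4 * t k ^ 2)) / 2)
    (hz : ∀ k, 1 ≤ k → z k = d (x (k - 1)) (y k))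
    (hxpos : ∀ k, 1 ≤ k → 0 ≤ (⨆ i, (F i (x (k - 1)) - F i (z k))) → x k = z k)
    (hxneg : ∀ k, 1 ≤ k → ¬ 0 ≤ (⨆ i, (F i (x (k - 1)) - F i (z k))) → x k = x (k - 1))
    (hy : ∀ k, 1 ≤ k →
      y (k + 1) = x k + (t k / t (k + 1)) • (z k - x k) +
        ((t k - 1) / t (k + 1)) • (x k - x (k - 1)))
    (Xstar : Set (E n)) (hX : Xstar = {a | ¬ ∃ w : E n, ∀ i, F i w < F i a})
    (Ω : Set (E n)) (hΩ : Ω = {w | ∀ i, F i w ≤ F i (x 0)})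
    (hne : Xstar.Nonempty)
    (hdom : ∀ w ∈ Ω, ∃ a ∈ Xstar, ∀ i, F i a ≤ F i w)
    (A : Set ℝ)
    (hA : A = {r | ∃ a ∈ Xstar ∩ Ω,
      r = sInf {s | ∃ w : E n, (∀ i, F i w = F i a) ∧ s = ‖w - x 0‖ ^ 2}})
    (hbdd : BddAbove A)
    (R : ℝ) (hR : R = sSup A) :
    ∀ a : E n, MapClusterPt a Filter.atTop x → ¬ ∃ w : E n, ∀ i, F i w < F i a := by
  intro a ha
  have : Nonempty (Fin m) := ⟨⟨0, hm⟩⟩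
  obtain rfl : F = f + g := funext₂ hF
  lift ℓ to ℝ≥0 using hℓ.le
  have hfg : IsConvexComposite f g ℓ := {
    convexOn_left := hfc
    differentiable := fun i ↦ (hfd i).differentiable one_ne_zero
    lipschitzWith_gradient := fun i ↦ LipschitzWith.of_dist_le_mul fun p q ↦ by
      simpa only [dist_eq_norm] using
        (hflip i p q).trans (mul_le_mul_of_nonneg_right (hℓL i) (norm_nonneg _))
    convexOn_right := hgc }
  have hrun : IsMFISTA f g ℓ x y z t := {
    y_one := hy1
    t_one := ht1
    t_succ := fun k ↦ ht (k + 1) k.succ_pos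
    isMinOn_z := fun k ↦ isMinOn_univ_iff.2 fun w ↦ hz (k + 1) k.succ_pos ▸ hd (x k) (y (k + 1)) w
    x_eq_z := fun k ↦ hxpos (k + 1) k.succ_pos
    x_eq_x := fun k ↦ hxneg (k + 1) k.succ_pos
    y_succ := fun k ↦ hy (k + 1) k.succ_pos }
  exact stmt_17_general hfg
    (fun i ↦ (hgc i).locallyLipschitz.continuous.lowerSemicontinuous) hrun ha
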